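/- Let d ≥ 6 and α, β ∈ ℝ, and let T be the d×d symmetric Toeplitz matrix with T_{ii} = 1, T_{ij} = α when |i − j| = 1, T_{ij} = β when |i − j| = 2, and T_{ij} = 0 when |i − j| ≥ 3. Then (1/d)·T ∈ ℬ_d (i.e. T is a tail dependence matrix) if and only if α ≥ 0, β ≥ 0, α + 4β ≤ 2, and 2α − β ≤ 1. -/

import Mathlib

/-- The set of `d × d` Bernoulli compatible matrices: the convex hull of the
outer products `v vᵀ` of 0-1 vectors `v ∈ {0,1}^d`. -/
def BernoulliSet (d : ℕ) : Set (Matrix (Fin d) (Fin d) ℝ) :=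
  convexHull ℝ {M | ∃ v : Fin d → ℝ, (∀ i, v i = 0 ∨ v i = 1) ∧
    M = Matrix.of (fun i j => v i * v j)}

/-!
A matrix `M` of positive trace lies in the correlation cone, the conic hull of the matrices `v vᵀ`
with `v` a 0-1 vector, if and only if `M / tr M` is Bernoulli compatible. The four conditions are
linear inequalities valid on this cone, evaluated at the banded matrix: entries are nonnegative,
`2α - β ≤ 1` comes from `(v₁ - v₀) (v₁ - v₂) ≥ 0`, and `α + 4β ≤ 2` from a quadratic inequality in
six consecutive coordinates.

Conversely, summing `v vᵀ` over all translates of a finite window `P ⊆ ℤ` gives the Toeplitz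
matrix of the autocorrelation of `P`. The windows `{0}`, `{0, 1}`, `{0, 2}`, `{0, 1, 2}` have
autocorrelations `(1, 0, 0)`, `(2, 1, 0)`, `(2, 0, 1)`, `(3, 2, 1)` at distances `0, 1, 2`, and the
banded matrix is a nonnegative combination of these four.
-/

open Finset Matrix
open scoped Pointwise

section CorrelationCone

variable {ι : Type*}

/-- The correlation cone: the conic hull of the outer products of 0-1 vectors. Its generators are
written exactly as in `BernoulliSet`, so that results transfer definitionally. -/
def correlationCone (ι : Type*) : PointedCone ℝ (Matrix ι ι ℝ) :=
  PointedCone.hull ℝ {M | ∃ v : ι → ℝ, (∀ i, v i = 0 ∨ v i = 1) ∧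
    M = Matrix.of (fun i j => v i * v j)}

theorem outer_mem_correlationCone {v : ι → ℝ} (hv : ∀ i, v i = 0 ∨ v i = 1) :
    Matrix.of (fun i j => v i * v j) ∈ correlationCone ι :=
  PointedCone.subset_hull ⟨v, hv, rfl⟩

theorem map_nonneg_of_mem_correlationCone (L : Matrix ι ι ℝ →ₗ[ℝ] ℝ)
    (hL : ∀ v : ι → ℝ, (∀ i, v i = 0 ∨ v i = 1) → 0 ≤ L (Matrix.of fun i j => v i * v j))
    {M : Matrix ι ι ℝ} (hM : M ∈ correlationCone ι) : 0 ≤ L M := by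
  have hle : correlationCone ι ≤ (PointedCone.positive ℝ ℝ).comap L :=
    Submodule.span_le.2 <| by
      rintro _ ⟨v, hv, rfl⟩
      exact hL v hv
  exact hle hM

theorem apply_nonneg_of_mem_correlationCone {M : Matrix ι ι ℝ} (hM : M ∈ correlationCone ι)
    (i j : ι) : 0 ≤ M i j := by
  refine map_nonneg_of_mem_correlationCone (entryLinearMap ℝ ℝ i j) (fun v hv => ?_) hM
  have hv0 : ∀ i, 0 ≤ v i := fun i => by rcases hv i with h | h <;> simp [h]
  exact mul_nonneg (hv0 i) (hv0 j)

theorem add_le_diag_add_of_mem_correlationCone {M : Matrix ι ι ℝ} (hM : M ∈ correlationCone ι)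
    (i j k : ι) : M i j + M j k ≤ M j j + M i k := by
  let E := entryLinearMap (m := ι) (n := ι) ℝ ℝ
  have hL : 0 ≤ (E j j + E i k - (E i j + E j k)) M := by
    refine map_nonneg_of_mem_correlationCone _ (fun v hv => ?_) hM
    have hfactor : 0 ≤ (v j - v i) * (v j - v k) := by
      rcases hv i with hi | hi <;> rcases hv j with hj | hj <;> rcases hv k with hk | hk <;>
        norm_num [hi, hj, hk]
    change 0 ≤ v j * v j + v i * v k - (v i * v j + v j * v k)
    linarith
  exact sub_nonneg.1 hL

theorem six_point_form_nonneg {a b c d e f : ℝ} (ha : a ∈ Set.Icc 0 1) (hb : b ∈ Set.Icc 0 1)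
    (hc : c = 0 ∨ c = 1) (hd : d = 0 ∨ d = 1) (he : e ∈ Set.Icc 0 1) (hf : f ∈ Set.Icc 0 1) :
    0 ≤ c * c + d * d + (a * d + a * e + a * f + b * e + b * f + c * f)
      - (c * d + a * c + c * e + b * d + d * f) := by
  -- For `(c, d) = (1, 0), (0, 1), (1, 1)` the form is respectively `(1 - a) (1 - e)`,
  -- `(1 - b) (1 - f)`, `(1 - b) (1 - e)` plus a sum of monomials in `a, b, e, f`.
  have hae := mul_nonneg ha.1 he.1
  have haf := mul_nonneg ha.1 hf.1
  have hbe := mul_nonneg hb.1 he.1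
  have hbf := mul_nonneg hb.1 hf.1
  have hae' := mul_nonneg (sub_nonneg.2 ha.2) (sub_nonneg.2 he.2)
  have hbe' := mul_nonneg (sub_nonneg.2 hb.2) (sub_nonneg.2 he.2)
  have hbf' := mul_nonneg (sub_nonneg.2 hb.2) (sub_nonneg.2 hf.2)
  rcases hc with rfl | rfl <;> rcases hd with rfl | rfl <;> linarith [ha.1, hf.1]

theorem six_point_le_of_mem_correlationCone {M : Matrix ι ι ℝ} (hM : M ∈ correlationCone ι)
    (a b c d e f : ι) :
    M c d + M a c + M c e + M b d + M d f ≤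
      M c c + M d d + (M a d + M a e + M a f + M b e + M b f + M c f) := by
  let E := entryLinearMap (m := ι) (n := ι) ℝ ℝ
  have hL : 0 ≤ (E c c + E d d + (E a d + E a e + E a f + E b e + E b f + E c f)
      - (E c d + E a c + E c e + E b d + E d f)) M := by
    refine map_nonneg_of_mem_correlationCone _ (fun v hv => ?_) hM
    have hIcc : ∀ i, v i ∈ Set.Icc 0 1 := fun i => by rcases hv i with h | h <;> simp [h]
    exact six_point_form_nonneg (hIcc a) (hIcc b) (hv c) (hv d) (hIcc e) (hIcc f)
  exact sub_nonneg.1 hL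

theorem trace_nonneg_of_mem_correlationCone [Fintype ι] {M : Matrix ι ι ℝ}
    (hM : M ∈ correlationCone ι) : 0 ≤ M.trace :=
  Finset.sum_nonneg fun i _ => apply_nonneg_of_mem_correlationCone hM i i

end CorrelationCone

section BernoulliSet

variable {d : ℕ}

theorem convex_bernoulliSet : Convex ℝ (BernoulliSet d) := convex_convexHull ℝ _

theorem outer_mem_bernoulliSet {v : Fin d → ℝ} (hv : ∀ i, v i = 0 ∨ v i = 1) :
    Matrix.of (fun i j => v i * v j) ∈ BernoulliSet d :=
  subset_convexHull ℝ _ ⟨v, hv, rfl⟩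

theorem zero_mem_bernoulliSet : (0 : Matrix (Fin d) (Fin d) ℝ) ∈ BernoulliSet d := by
  convert outer_mem_bernoulliSet (v := (0 : Fin d → ℝ)) fun _ => Or.inl rfl
  ext
  simp

theorem bernoulliSet_subset_correlationCone : BernoulliSet d ⊆ correlationCone (Fin d) :=
  convexHull_min PointedCone.subset_hull (PointedCone.convex _)

theorem outer_mem_trace_smul_bernoulliSet {v : Fin d → ℝ} (hv : ∀ i, v i = 0 ∨ v i = 1) :
    Matrix.of (fun i j => v i * v j) ∈
      (Matrix.of fun i j => v i * v j).trace • BernoulliSet d := by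
  by_cases hzero : v = 0
  · subst hzero
    exact ⟨0, zero_mem_bernoulliSet, by ext; simp⟩
  · obtain ⟨i, hi⟩ := Function.ne_iff.1 hzero
    have htrace : 1 ≤ (Matrix.of fun i j => v i * v j).trace :=
      calc (1 : ℝ) = v i * v i := by rw [(hv i).resolve_left hi, one_mul]
        _ ≤ ∑ j, v j * v j :=
          single_le_sum (f := fun j => v j * v j) (fun j _ => mul_self_nonneg _) (mem_univ i)
    exact convex_bernoulliSet.mem_smul_of_zero_mem zero_mem_bernoulliSet
      (outer_mem_bernoulliSet hv) htrace

theorem mem_trace_smul_bernoulliSet {M : Matrix (Fin d) (Fin d) ℝ}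
    (hM : M ∈ correlationCone (Fin d)) : M ∈ M.trace • BernoulliSet d := by
  induction hM using Submodule.span_induction with
  | mem _ hM =>
    obtain ⟨v, hv, rfl⟩ := hM
    exact outer_mem_trace_smul_bernoulliSet hv
  | zero => exact ⟨0, zero_mem_bernoulliSet, smul_zero _⟩
  | add M N hM hN ihM ihN =>
    rw [trace_add, convex_bernoulliSet.add_smul (trace_nonneg_of_mem_correlationCone hM)
      (trace_nonneg_of_mem_correlationCone hN)]
    exact Set.add_mem_add ihM ihN
  | smul c M _ ih =>
    rw [trace_smul, smul_assoc]
    exact Set.smul_mem_smul_set ih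

theorem inv_trace_smul_mem_bernoulliSet_iff {M : Matrix (Fin d) (Fin d) ℝ} (hM : 0 < M.trace) :
    M.trace⁻¹ • M ∈ BernoulliSet d ↔ M ∈ correlationCone (Fin d) := by
  refine ⟨fun h => ?_, fun h => ?_⟩
  · exact (PointedCone.smul_mem_iff _ (inv_pos.2 hM)).1 (bernoulliSet_subset_correlationCone h)
  · exact (Set.mem_smul_set_iff_inv_smul_mem₀ hM.ne' _ _).1 (mem_trace_smul_bernoulliSet h)

end BernoulliSet

section Autocorrelation

variable {G : Type*} [AddCommGroup G] [DecidableEq G]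

/-- The autocorrelation of a finite set `P` at `g`: the number of pairs `(p, q) ∈ P × P` with
`q - p = g`, counted by `p`. It gives the entries of the sum of the outer products of the translates
of the indicator vector of `P`. -/
def autocorrelation (P : Finset G) (g : G) : ℕ := #{p ∈ P | p + g ∈ P}

theorem autocorrelation_neg (P : Finset G) (g : G) :
    autocorrelation P (-g) = autocorrelation P g := by
  refine card_nbij' (· + -g) (· + g) ?_ ?_ ?_ ?_ <;> intro p <;> simp +contextual

theorem autocorrelation_mem_correlationCone {ι : Type*} [Finite ι] (P : Finset G) (x : ι → G) :
    (Matrix.of fun i j => (autocorrelation P (x j - x i) : ℝ)) ∈ correlationCone ι := by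
  have := Fintype.ofFinite ι
  let shifts : Finset G := image₂ (fun i p => x i - p) univ P
  let v (s : G) (i : ι) : ℝ := if x i - s ∈ P then 1 else 0
  have hcount (i j : ι) :
      autocorrelation P (x j - x i) = #{s ∈ shifts | x i - s ∈ P ∧ x j - s ∈ P} := by
    refine card_nbij' (x i - ·) (x i - ·) (fun p hp => ?_) (fun s hs => ?_)
      (fun p _ => sub_sub_cancel _ _) (fun s _ => sub_sub_cancel _ _)
    · obtain ⟨hp, hpg⟩ := mem_filter.1 hp
      have hj : x j - (x i - p) = p + (x j - x i) := by abel
      exact mem_filter.2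
        ⟨mem_image₂_of_mem (mem_univ i) hp, by rwa [sub_sub_cancel], by rwa [hj]⟩
    · obtain ⟨-, hi, hj⟩ := mem_filter.1 hs
      have hij : x i - s + (x j - x i) = x j - s := by abel
      exact mem_filter.2 ⟨hi, by rwa [hij]⟩
  have hsum : (Matrix.of fun i j => (autocorrelation P (x j - x i) : ℝ)) =
      ∑ s ∈ shifts, Matrix.of fun i j => v s i * v s j := by
    ext i j
    simp only [Matrix.sum_apply, of_apply, hcount, v, ite_zero_mul_ite_zero, mul_one, sum_boole]
  rw [hsum]
  exact Submodule.sum_mem _ fun s _ =>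
    outer_mem_correlationCone fun i => (ite_eq_or_eq _ _ _).symm

theorem autocorrelation_eq_zero_of_subset_Icc {P : Finset ℤ} {a b g : ℤ} (hP : P ⊆ Icc a b)
    (hg : b - a < g) : autocorrelation P g = 0 := by
  refine card_eq_zero.2 (filter_eq_empty_iff.2 fun p hp hpg => ?_)
  have hlower := (mem_Icc.1 (hP hp)).1
  have hupper := (mem_Icc.1 (hP hpg)).2
  omega

theorem autocorrelation_natCast_sub (P : Finset ℤ) (m n : ℕ) :
    autocorrelation P ((n : ℤ) - m) = autocorrelation P (Nat.dist m n : ℤ) := by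
  rcases le_total m n with h | h
  · rw [Nat.dist_eq_sub_of_le h, Nat.cast_sub h]
  · rw [Nat.dist_eq_sub_of_le_right h, Nat.cast_sub h, ← autocorrelation_neg, neg_sub]

end Autocorrelation

/-- The symmetric Toeplitz matrix with unit diagonal, `α` at distance one from the diagonal, `β` at
distance two and zero elsewhere. -/
def bandToeplitz (d : ℕ) (α β : ℝ) : Matrix (Fin d) (Fin d) ℝ :=
  Matrix.of fun i j =>
    if Nat.dist i.val j.val = 0 then 1
    else if Nat.dist i.val j.val = 1 then α
    else if Nat.dist i.val j.val = 2 then β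
    else 0

theorem trace_bandToeplitz (d : ℕ) (α β : ℝ) : (bandToeplitz d α β).trace = d := by
  simp [bandToeplitz, Matrix.trace]

theorem band_eq_autocorrelation (α β t : ℝ) (k : ℕ) :
    (if k = 0 then 1 else if k = 1 then α else if k = 2 then β else 0) =
    (1 - 2 * α - 2 * β + 3 * t) * autocorrelation {0} (k : ℤ)
      + (α - 2 * t) * autocorrelation {0, 1} (k : ℤ)
      + (β - t) * autocorrelation {0, 2} (k : ℤ)
      + t * autocorrelation {0, 1, 2} (k : ℤ) := by
  match k with
  | 0 =>
    have h₀ : autocorrelation {0} ((0 : ℕ) : ℤ) = 1 := rfl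
    have h₁ : autocorrelation {0, 1} ((0 : ℕ) : ℤ) = 2 := rfl
    have h₂ : autocorrelation {0, 2} ((0 : ℕ) : ℤ) = 2 := rfl
    have h₃ : autocorrelation {0, 1, 2} ((0 : ℕ) : ℤ) = 3 := rfl
    rw [if_pos rfl, h₀, h₁, h₂, h₃]
    push_cast
    ring
  | 1 =>
    have h₀ : autocorrelation {0} ((1 : ℕ) : ℤ) = 0 := rfl
    have h₁ : autocorrelation {0, 1} ((1 : ℕ) : ℤ) = 1 := rfl
    have h₂ : autocorrelation {0, 2} ((1 : ℕ) : ℤ) = 0 := rfl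
    have h₃ : autocorrelation {0, 1, 2} ((1 : ℕ) : ℤ) = 2 := rfl
    rw [if_neg one_ne_zero, if_pos rfl, h₀, h₁, h₂, h₃]
    push_cast
    ring
  | 2 =>
    have h₀ : autocorrelation {0} ((2 : ℕ) : ℤ) = 0 := rfl
    have h₁ : autocorrelation {0, 1} ((2 : ℕ) : ℤ) = 0 := rfl
    have h₂ : autocorrelation {0, 2} ((2 : ℕ) : ℤ) = 1 := rfl
    have h₃ : autocorrelation {0, 1, 2} ((2 : ℕ) : ℤ) = 1 := rfl
    rw [if_neg two_ne_zero, if_neg (by decide), if_pos rfl, h₀, h₁, h₂, h₃]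
    push_cast
    ring
  | k + 3 =>
    have hvanish {P : Finset ℤ} (hP : P ⊆ Icc 0 2) : autocorrelation P ((k + 3 : ℕ) : ℤ) = 0 :=
      autocorrelation_eq_zero_of_subset_Icc hP (by omega)
    rw [hvanish (P := {0}) (by decide), hvanish (P := {0, 1}) (by decide),
      hvanish (P := {0, 2}) (by decide), hvanish (P := {0, 1, 2}) (by decide)]
    simp

theorem bandToeplitz_mem_correlationCone {d : ℕ} {α β t : ℝ} (ht : 0 ≤ t) (hβ : t ≤ β)
    (hα : 2 * t ≤ α) (hdiag : 2 * α + 2 * β ≤ 1 + 3 * t) :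
    bandToeplitz d α β ∈ correlationCone (Fin d) := by
  let A (P : Finset ℤ) : Matrix (Fin d) (Fin d) ℝ :=
    Matrix.of fun i j => (autocorrelation P ((j : ℤ) - (i : ℤ)) : ℝ)
  have hA (P : Finset ℤ) {c : ℝ} (hc : 0 ≤ c) : c • A P ∈ correlationCone (Fin d) :=
    PointedCone.smul_mem _ hc (autocorrelation_mem_correlationCone P fun i : Fin d => (i : ℤ))
  have hdecomp : bandToeplitz d α β = (1 - 2 * α - 2 * β + 3 * t) • A {0}
      + (α - 2 * t) • A {0, 1} + (β - t) • A {0, 2} + t • A {0, 1, 2} := by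
    ext i j
    simpa [A, bandToeplitz, autocorrelation_natCast_sub] using
      band_eq_autocorrelation α β t (Nat.dist i j)
  rw [hdecomp]
  exact add_mem (add_mem (add_mem (hA _ (by linarith)) (hA _ (by linarith)))
    (hA _ (by linarith))) (hA _ ht)

theorem bandToeplitz_mem_correlationCone_iff {d : ℕ} (hd : 6 ≤ d) (α β : ℝ) :
    bandToeplitz d α β ∈ correlationCone (Fin d) ↔
      (0 ≤ α ∧ 0 ≤ β ∧ α + 4 * β ≤ 2 ∧ 2 * α - β ≤ 1) := by
  constructor
  · intro h
    let e : Fin 6 → Fin d := Fin.castLE hd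
    have hα : 0 ≤ α := by
      simpa [bandToeplitz, e, Nat.dist] using apply_nonneg_of_mem_correlationCone h (e 0) (e 1)
    have hβ : 0 ≤ β := by
      simpa [bandToeplitz, e, Nat.dist] using apply_nonneg_of_mem_correlationCone h (e 0) (e 2)
    have htri : α + α ≤ 1 + β := by
      simpa [bandToeplitz, e, Nat.dist] using
        add_le_diag_add_of_mem_correlationCone h (e 0) (e 1) (e 2)
    have hsix : α + β + β + β + β ≤ 1 + 1 := by
      simpa [bandToeplitz, e, Nat.dist] using
        six_point_le_of_mem_correlationCone h (e 0) (e 1) (e 2) (e 3) (e 4) (e 5)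
    refine ⟨hα, hβ, ?_, ?_⟩ <;> linarith
  · rintro ⟨hα, hβ, hsix, htri⟩
    -- The weight `1 - 2α - 2β + 3t` of `{0}` increases with `t`, so `t` is taken as large as the
    -- weights `α - 2t` and `β - t` of `{0, 1}` and `{0, 2}` allow.
    refine bandToeplitz_mem_correlationCone (t := min β (α / 2)) (le_min hβ (by linarith))
      (min_le_left _ _) (by linarith [min_le_right β (α / 2)]) ?_
    rcases min_choice β (α / 2) with h | h <;> rw [h] <;> linarith

theorem stmt9 (d : ℕ) (hd : 6 ≤ d) (α β : ℝ)
    (T : Matrix (Fin d) (Fin d) ℝ)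
    (hT : ∀ i j, T i j =
      if Nat.dist i.val j.val = 0 then 1
      else if Nat.dist i.val j.val = 1 then α
      else if Nat.dist i.val j.val = 2 then β
      else 0) :
    ((1 : ℝ) / d) • T ∈ BernoulliSet d ↔
      (0 ≤ α ∧ 0 ≤ β ∧ α + 4 * β ≤ 2 ∧ 2 * α - β ≤ 1) := by
  obtain rfl : T = bandToeplitz d α β := Matrix.ext hT
  have htrace : 0 < (bandToeplitz d α β).trace := by
    rw [trace_bandToeplitz]
    exact_mod_cast (by omega : 0 < d)
  rw [one_div, ← trace_bandToeplitz d α β, inv_trace_smul_mem_bernoulliSet_iff htrace,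
    bandToeplitz_mem_correlationCone_iff hd]
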